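/- Let A be a ring and let M be an endofinite A-module (i.e. M has finite composition length as a module over its endomorphism ring End_A(M)). Then for every finitely presented A-module X, the End_A(M)-module Hom_A(X,M) (with End_A(M) acting by postcomposition) has finite composition length, and the function χ_M sending X to ℓ_{End_A(M)}(Hom_A(X,M)) is a subadditive function: χ_M(X ⊕ Y) = χ_M(X) + χ_M(Y) for all finitely presented X, Y, and χ_M(X) + χ_M(Z) ≥ χ_M(Y) for every exact sequence X → Y → Z → 0 of finitely presented A-modules. -/

import Mathlib

/-- The composition length of a module (the length of a composition series,
zero if none exists). -/
noncomputable def compLength (R : Type) [Ring R] (M : Type) [AddCommGroup M] [Module R M] : ℕ := by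
  classical
  exact if h : ∃ s : CompositionSeries (Submodule R M), s.head = ⊥ ∧ s.last = ⊤ then
    h.choose.length else 0

/-- A module `M` is endofinite if it has finite composition length over its
endomorphism ring, which acts on `M` by application. -/
def IsEndofinite (A : Type) [Ring A] (M : Type) [AddCommGroup M] [Module A M] : Prop :=
  IsFiniteLength (Module.End A M) M

/-- The subadditive function `χ_M` associated to a module `M`:
`χ_M(X) = ℓ_{End_A(M)} Hom_A(X, M)`, where `End_A(M)` acts by postcomposition. -/
noncomputable def chiMod (A : Type) [Ring A] (M : Type) [AddCommGroup M] [Module A M]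
    (X : Type) [AddCommGroup X] [Module A X] : ℕ :=
  compLength (Module.End A M) (X →ₗ[A] M)

/-- A subadditive function on the finitely presented `A`-modules: it depends only on
the isomorphism class, is additive on direct sums, and satisfies
`χ(X) + χ(Z) ≥ χ(Y)` for every exact sequence `X → Y → Z → 0`. -/
def IsSubadditive (A : Type) [Ring A]
    (χ : (X : Type) → [AddCommGroup X] → [Module A X] → ℕ) : Prop :=
  (∀ (X Y : Type) [AddCommGroup X] [Module A X] [AddCommGroup Y] [Module A Y],
      Module.FinitePresentation A X → Module.FinitePresentation A Y →
      (X ≃ₗ[A] Y) → χ X = χ Y) ∧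
  (∀ (X Y : Type) [AddCommGroup X] [Module A X] [AddCommGroup Y] [Module A Y],
      Module.FinitePresentation A X → Module.FinitePresentation A Y →
      χ (X × Y) = χ X + χ Y) ∧
  (∀ (X Y Z : Type) [AddCommGroup X] [Module A X] [AddCommGroup Y] [Module A Y]
      [AddCommGroup Z] [Module A Z],
      Module.FinitePresentation A X → Module.FinitePresentation A Y →
      Module.FinitePresentation A Z →
      ∀ (f : X →ₗ[A] Y) (g : Y →ₗ[A] Z),
      Function.Exact f g → Function.Surjective g → χ Y ≤ χ X + χ Z)

/-- Membership in the additive locus `Adloc(χ)`: `Z` is finitely presented and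
`χ(X) - χ(Y) + χ(Z) = 0` for every short exact sequence `0 → X → Y → Z → 0` of
finitely presented modules. -/
def MemAdloc (A : Type) [Ring A]
    (χ : (X : Type) → [AddCommGroup X] → [Module A X] → ℕ)
    (Z : Type) [AddCommGroup Z] [Module A Z] : Prop :=
  Module.FinitePresentation A Z ∧
  ∀ (X Y : Type) [AddCommGroup X] [Module A X] [AddCommGroup Y] [Module A Y],
    Module.FinitePresentation A X → Module.FinitePresentation A Y →
    ∀ (f : X →ₗ[A] Y) (g : Y →ₗ[A] Z),
    Function.Injective f → Function.Exact f g → Function.Surjective g →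
    χ X + χ Z = χ Y

/-- The hypothesis that the finitely presented `A`-modules form an abelian category:
kernels of maps between finitely presented modules are finitely presented. -/
def FpAbelian (A : Type) [Ring A] : Prop :=
  ∀ (X Y : Type) [AddCommGroup X] [Module A X] [AddCommGroup Y] [Module A Y],
    Module.FinitePresentation A X → Module.FinitePresentation A Y →
    ∀ f : X →ₗ[A] Y, Module.FinitePresentation A (LinearMap.ker f)

lemma coe_compLength (R : Type) [Ring R] (M : Type) [AddCommGroup M] [Module R M]
    (h : IsFiniteLength R M) : (compLength R M : ℕ∞) = Module.length R M := by
  have h' := isFiniteLength_iff_exists_compositionSeries.mp h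
  unfold compLength
  simp only [dif_pos h']
  exact Module.length_compositionSeries _ h'.choose_spec.1 h'.choose_spec.2

/-- Precomposition as an `End`-linear map. -/
def preComp (A : Type) [Ring A] (M : Type) [AddCommGroup M] [Module A M]
    {X Y : Type} [AddCommGroup X] [Module A X] [AddCommGroup Y] [Module A Y] (f : X →ₗ[A] Y) :
    (Y →ₗ[A] M) →ₗ[Module.End A M] (X →ₗ[A] M) where
  toFun φ := φ.comp f
  map_add' _ _ := rfl
  map_smul' _ _ := rfl

lemma preComp_injective (A : Type) [Ring A] (M : Type) [AddCommGroup M] [Module A M]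
    {X Y : Type} [AddCommGroup X] [Module A X] [AddCommGroup Y] [Module A Y] (f : X →ₗ[A] Y)
    (hf : Function.Surjective f) : Function.Injective (preComp A M f) := by
  intro a b h
  ext y
  obtain ⟨x, rfl⟩ := hf y
  exact LinearMap.congr_fun h x

lemma finLen (A : Type) [Ring A] (M : Type) [AddCommGroup M] [Module A M]
    (hM : IsEndofinite A M) (X : Type) [AddCommGroup X] [Module A X]
    (hX : Module.FinitePresentation A X) : IsFiniteLength (Module.End A M) (X →ₗ[A] M) := by
  have : Module.Finite A X := inferInstance
  obtain ⟨n, f, hf⟩ := Module.Finite.exists_fin' A X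
  let e : (X →ₗ[A] M) →ₗ[Module.End A M] (Fin n → M) :=
    { toFun := fun φ i => φ (f (Pi.single i 1))
      map_add' := fun _ _ => rfl
      map_smul' := fun _ _ => rfl }
  have he : Function.Injective e := by
    intro a b h
    apply preComp_injective A M f hf
    apply LinearMap.pi_ext'
    intro i
    ext
    exact congrFun h i
  rw [← Module.length_ne_top_iff]
  refine ne_top_of_le_ne_top ?_ (Module.length_le_of_injective e he)
  have := Module.length_ne_top_iff.mpr hM
  rw [Module.length_pi_of_fintype]
  exact WithTop.sum_ne_top.mpr fun _ _ => this

theorem statement0 (A : Type) [Ring A] (M : Type) [AddCommGroup M] [Module A M]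
    (hM : IsEndofinite A M) :
    (∀ (X : Type) [AddCommGroup X] [Module A X], Module.FinitePresentation A X →
      IsFiniteLength (Module.End A M) (X →ₗ[A] M)) ∧
    IsSubadditive A (chiMod A M) := by
  have key : ∀ (X : Type) [AddCommGroup X] [Module A X], Module.FinitePresentation A X →
      (chiMod A M X : ℕ∞) = Module.length (Module.End A M) (X →ₗ[A] M) :=
    fun X _ _ hX => coe_compLength _ _ (finLen A M hM X hX)
  refine ⟨fun X _ _ hX => finLen A M hM X hX, ?_, ?_, ?_⟩
  · intro X Y _ _ _ _ hX hY e
    apply ENat.natCast_inj.mp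
    rw [key X hX, key Y hY]
    exact le_antisymm
      (Module.length_le_of_injective _ (preComp_injective A M e.symm.toLinearMap e.symm.surjective))
      (Module.length_le_of_injective _ (preComp_injective A M e.toLinearMap e.surjective))
  · intro X Y _ _ _ _ hX hY
    have hXY : Module.FinitePresentation A (X × Y) := inferInstance
    apply ENat.natCast_inj.mp
    rw [Nat.cast_add, key X hX, key Y hY, key _ hXY]
    refine Module.length_eq_add_of_exact (preComp A M (LinearMap.fst A X Y))
      (preComp A M (LinearMap.inr A X Y)) (preComp_injective A M _ LinearMap.fst_surjective)
      ?_ ?_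
    · intro φ
      exact ⟨φ.comp (LinearMap.snd A X Y), by ext; simp [preComp]⟩
    · intro φ
      constructor
      · intro h
        refine ⟨φ.comp (LinearMap.inl A X Y), ?_⟩
        apply LinearMap.prod_ext
        · ext; simp [preComp]
        · refine Eq.trans ?_ h.symm
          ext; simp [preComp]; exact map_zero φ
      · rintro ⟨ψ, rfl⟩
        ext; simp [preComp]
  · intro X Y Z _ _ _ _ _ _ hX hY hZ f g hfg hg
    have : (chiMod A M Y : ℕ∞) ≤ ((chiMod A M X + chiMod A M Z : ℕ) : ℕ∞) := by
      rw [Nat.cast_add, key X hX, key Y hY, key Z hZ, add_comm]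
      rw [Module.length_eq_add_of_exact (preComp A M g) (preComp A M f).rangeRestrict
        (preComp_injective A M g hg) (LinearMap.surjective_rangeRestrict _) ?_]
      · gcongr
        exact Module.length_le_of_injective _ (Submodule.subtype_injective _)
      · intro φ
        constructor
        · intro h
          have h' : φ.comp f = 0 := congrArg Subtype.val h
          have hk : LinearMap.ker g ≤ LinearMap.ker φ := by
            intro y hy
            obtain ⟨x, rfl⟩ := (hfg y).mp hy
            exact LinearMap.congr_fun h' x
          refine ⟨((LinearMap.ker g).liftQ φ hk).comp
            (g.quotKerEquivOfSurjective hg).symm.toLinearMap, ?_⟩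
          ext y
          have : (g.quotKerEquivOfSurjective hg).symm (g y) = (LinearMap.ker g).mkQ y := by
            rw [LinearEquiv.symm_apply_eq]; rfl
          change (LinearMap.ker g).liftQ φ hk ((g.quotKerEquivOfSurjective hg).symm (g y)) = φ y
          rw [this]; rfl
        · rintro ⟨ψ, rfl⟩
          apply Subtype.ext
          ext x
          change ψ (g (f x)) = 0
          rw [(hfg (f x)).mpr ⟨x, rfl⟩, map_zero]
    exact_mod_cast this
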